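/- arXiv:2605.08871 — 2 statements merged into one kernel-verified Lean document; each statement's English description precedes it below -/
import Mathlib

section
/- Let p ∈ (0,1] and let ξ ∼ Bernoulli(p). Then the smoothed estimator ḡ_T is mean-squared smooth with constant 328/√p: for all x, y ∈ ℝ^T, E_ξ[‖ḡ_T(x,ξ) − ḡ_T(y,ξ)‖²] ≤ (328²/p)·‖x − y‖² (Euclidean norm). -/
open MeasureTheory

/-- The scalar function `Ψ` of the hard-instance construction. -/
noncomputable def Psi (t : ℝ) : ℝ :=
  if t ≤ 1 / 2 then 0 else Real.exp (1 - 1 / (2 * t - 1) ^ 2)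

/-- The scalar function `Φ(t) = √e ∫_{−∞}^t e^{−τ²/2} dτ` of the hard-instance
construction. -/
noncomputable def Phi (t : ℝ) : ℝ :=
  Real.sqrt (Real.exp 1) * ∫ τ in Set.Iic t, Real.exp (-τ ^ 2 / 2)

/-- The hard-instance chain function `F_T` on `ℝ^{T+1}` (so the paper's dimension `T ≥ 1`
is `T + 1` here; the paper's coordinate `xᵢ`, `1 ≤ i ≤ T`, is the zero-based coordinate
`x (i−1)`). -/
noncomputable def chainF (T : ℕ) (x : EuclideanSpace ℝ (Fin (T + 1))) : ℝ :=
  -Psi 1 * Phi (x 0) +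
    ∑ i : Fin T,
      (Psi (-(x i.castSucc)) * Phi (-(x i.succ)) - Psi (x i.castSucc) * Phi (x i.succ))

/-- `prog α x` is the largest one-based index `i ∈ {0, 1, …, n}` such that `|xᵢ| > α`
(with the paper's convention `x₀ ≡ 1`, so the value `0` is allowed and returned when no
coordinate exceeds `α`). -/
noncomputable def prog {n : ℕ} (α : ℝ) (x : EuclideanSpace ℝ (Fin n)) : ℕ :=
  (Finset.univ.filter fun i : Fin n => α < |x i|).sup fun i => (i : ℕ) + 1

/-- The bump function `Λ` supported on `(1/4, 1/2)`. -/
noncomputable def Lam (t : ℝ) : ℝ :=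
  if 1 / 4 < t ∧ t < 1 / 2 then
    Real.exp (-1 / (100 * (t - 1 / 4) * (1 / 2 - t)))
  else 0

/-- The integrated bump function `Γ(t) = (∫_{1/4}^t Λ) / (∫_{1/4}^{1/2} Λ)`. -/
noncomputable def Gam (t : ℝ) : ℝ :=
  (∫ τ in (1 / 4 : ℝ)..t, Lam τ) / ∫ τ in (1 / 4 : ℝ)..(1 / 2 : ℝ), Lam τ

/-- `Θ_i(x) = Γ(1 − ‖(Γ(|x_i|), …, Γ(|x_T|))‖₂)`. -/
noncomputable def Theta (T : ℕ) (x : EuclideanSpace ℝ (Fin (T + 1)))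
    (i : Fin (T + 1)) : ℝ :=
  Gam (1 - Real.sqrt (∑ j ∈ Finset.univ.filter fun j : Fin (T + 1) => i ≤ j,
    Gam |x j| ^ 2))

/-- The smoothed estimator `[ḡ_T(x,ξ)]ᵢ = ∂ᵢF_T(x)·(1 + Θᵢ(x)(ξ/p − 1))`, for
`ξ ∈ {0, 1} ⊆ ℝ`. -/
noncomputable def gbar (T : ℕ) (p : ℝ) (x : EuclideanSpace ℝ (Fin (T + 1)))
    (ξ : ℝ) : EuclideanSpace ℝ (Fin (T + 1)) :=
  WithLp.toLp 2 fun i => gradient (chainF T) x i * (1 + Theta T x i * (ξ / p - 1))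

/-! ### The function Psi -/

noncomputable def Psi1 (t : ℝ) : ℝ :=
  if t ≤ 1 / 2 then 0 else 4 / (2 * t - 1) ^ 3 * Real.exp (1 - 1 / (2 * t - 1) ^ 2)

lemma Psi_nonneg (t : ℝ) : 0 ≤ Psi t := by
  unfold Psi; split_ifs <;> positivity

lemma Psi_le (t : ℝ) : Psi t ≤ 2.72 := by
  unfold Psi; split_ifs
  · norm_num
  · calc Real.exp (1 - 1 / (2 * t - 1) ^ 2) ≤ Real.exp 1 := by
          apply Real.exp_le_exp.2
          have : 0 ≤ 1 / (2 * t - 1) ^ 2 := by positivity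
          linarith
      _ ≤ 2.72 := by have := Real.exp_one_lt_d9; norm_num at this ⊢; linarith

lemma Psi_zero {t : ℝ} (h : t ≤ 1 / 2) : Psi t = 0 := by simp only [Psi, if_pos h]
lemma Psi1_zero {t : ℝ} (h : t ≤ 1 / 2) : Psi1 t = 0 := by simp only [Psi1, if_pos h]

lemma Psi_one : Psi 1 = 1 := by
  unfold Psi; rw [if_neg (by norm_num)]; norm_num

lemma sq_bound (w : ℝ) (hw : 0 ≤ w) : w ^ 2 * Real.exp (1 - w) ≤ 4 * Real.exp (-1) := by
  have h := Real.add_one_le_exp (w / 2 - 1)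
  have h1 : w / 2 ≤ Real.exp (w / 2 - 1) := by linarith
  have h2 : (w / 2) ^ 2 ≤ Real.exp (w / 2 - 1) ^ 2 := by gcongr
  rw [← Real.exp_nat_mul] at h2
  have h3 : Real.exp ((2:ℕ) * (w / 2 - 1)) * Real.exp (1 - w) = Real.exp (-1) := by
    rw [← Real.exp_add]; congr 1; push_cast; ring
  nlinarith [Real.exp_pos (1 - w)]

lemma cube_bound (w : ℝ) (hw : 0 ≤ w) : w ^ 3 * Real.exp (1 - w) ≤ 27 * Real.exp (-2) := by
  have h := Real.add_one_le_exp (w / 3 - 1)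
  have h1 : w / 3 ≤ Real.exp (w / 3 - 1) := by linarith
  have h2 : (w / 3) ^ 3 ≤ Real.exp (w / 3 - 1) ^ 3 := by gcongr
  rw [← Real.exp_nat_mul] at h2
  have h3 : Real.exp ((3:ℕ) * (w / 3 - 1)) * Real.exp (1 - w) = Real.exp (-2) := by
    rw [← Real.exp_add]; congr 1; push_cast; ring
  nlinarith [Real.exp_pos (1 - w)]

lemma exp_neg_one_le : Real.exp (-1) ≤ 0.37 := by
  have := Real.exp_neg_one_lt_d9; norm_num at this ⊢; linarith

lemma exp_neg_two_le : Real.exp (-2) ≤ 0.1365 := by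
  have h : Real.exp (-2) = Real.exp (-1) ^ 2 := by
    rw [← Real.exp_nat_mul]; norm_num
  have h1 : Real.exp (-1) ≤ 0.368 := by
    have := Real.exp_neg_one_lt_d9; norm_num at this ⊢; linarith
  rw [h]; nlinarith [Real.exp_pos (-1)]

lemma Psi1_nonneg (t : ℝ) : 0 ≤ Psi1 t := by
  unfold Psi1; split_ifs with h
  · rfl
  · have : 0 < 2 * t - 1 := by linarith [not_le.1 h]
    positivity

lemma Psi1_le (t : ℝ) : Psi1 t ≤ 5 := by
  unfold Psi1; split_ifs with h
  · norm_num
  · have hs : 0 < 2 * t - 1 := by linarith [not_le.1 h]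
    set s := 2 * t - 1
    have hb := cube_bound (2 * (1 / s ^ 2)) (by positivity)
    apply abs_le_of_sq_le_sq' _ (by norm_num) |>.2
    have e1 : (4 / s ^ 3 * Real.exp (1 - 1 / s ^ 2)) ^ 2
        = 2 * Real.exp 1 * ((2 * (1 / s ^ 2)) ^ 3 * Real.exp (1 - 2 * (1 / s ^ 2))) := by
      have : Real.exp (1 - 1 / s ^ 2) ^ 2 = Real.exp 1 * Real.exp (1 - 2 * (1 / s ^ 2)) := by
        rw [← Real.exp_nat_mul, ← Real.exp_add]; congr 1; push_cast; ring
      rw [mul_pow, this]; field_simp; ring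
    rw [e1]
    have e2 : Real.exp 1 * Real.exp (-2) = Real.exp (-1) := by
      rw [← Real.exp_add]; norm_num
    nlinarith [exp_neg_one_le, Real.exp_pos 1, mul_le_mul_of_nonneg_left hb (Real.exp_pos 1).le]

lemma Psi1_le_lin (t : ℝ) (h : 1 / 2 < t) : Psi1 t ≤ 59 * (t - 1 / 2) := by
  unfold Psi1; rw [if_neg (not_le.2 h)]
  have hs : 0 < 2 * t - 1 := by linarith
  have e : t - 1 / 2 = (2 * t - 1) / 2 := by ring
  rw [e]
  set s := 2 * t - 1
  have hb := sq_bound (1 / s ^ 2) (by positivity)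
  have e1 : 4 / s ^ 3 * Real.exp (1 - 1 / s ^ 2)
      = 4 * s * ((1 / s ^ 2) ^ 2 * Real.exp (1 - 1 / s ^ 2)) := by field_simp
  rw [e1]
  nlinarith [exp_neg_one_le]

lemma hasDerivAt_aux (t : ℝ) (h : 1 / 2 < t) :
    HasDerivAt (fun t : ℝ => Real.exp (1 - 1 / (2 * t - 1) ^ 2))
      (4 / (2 * t - 1) ^ 3 * Real.exp (1 - 1 / (2 * t - 1) ^ 2)) t := by
  have hs : 2 * t - 1 ≠ 0 := by intro h'; linarith
  have h1 : HasDerivAt (fun t : ℝ => 2 * t - 1) 2 t := by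
    simpa using ((hasDerivAt_id t).const_mul 2).sub_const 1
  have h2 := (((h1.pow 2).inv (pow_ne_zero 2 hs)).const_sub 1).exp
  convert h2 using 1
  · ext; simp
  · simp; field_simp; ring

lemma hasDerivAt_Psi (t : ℝ) : HasDerivAt Psi (Psi1 t) t := by
  rcases lt_trichotomy t (1 / 2) with h | h | h
  · rw [Psi1_zero h.le]
    apply (hasDerivAt_const t (0:ℝ)).congr_of_eventuallyEq
    filter_upwards [Iio_mem_nhds h] with u hu
    exact Psi_zero (le_of_lt hu)
  · subst h
    rw [Psi1_zero le_rfl, hasDerivAt_iff_isLittleO]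
    rw [Psi_zero le_rfl]
    have : (fun x' : ℝ => Psi x' - 0 - (x' - 1 / 2) • (0:ℝ)) =O[nhds (1/2)]
        fun x' => (x' - 1 / 2) ^ 2 := by
      apply Asymptotics.IsBigO.of_bound 4
      filter_upwards with u
      simp only [sub_zero, smul_zero, Real.norm_eq_abs, abs_of_nonneg (Psi_nonneg u), abs_sq]
      unfold Psi; split_ifs with h
      · positivity
      · have hs : 0 < 2 * u - 1 := by linarith [not_le.1 h]
        have e : 4 * (u - 1 / 2) ^ 2 = (2 * u - 1) ^ 2 := by ring
        rw [e]
        set s := 2 * u - 1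
        have h1 := Real.add_one_le_exp (1 / s ^ 2 - 1)
        have h2 : Real.exp (1 - 1 / s ^ 2) * Real.exp (1 / s ^ 2 - 1) = 1 := by
          rw [← Real.exp_add]; simp
        have h3 : Real.exp (1 - 1 / s ^ 2) * (1 / s ^ 2) ≤ 1 := by
          calc _ ≤ Real.exp (1 - 1 / s ^ 2) * Real.exp (1 / s ^ 2 - 1) := by
                  apply mul_le_mul_of_nonneg_left _ (Real.exp_pos _).le
                  linarith
            _ = 1 := h2
        have h4 : 0 < s ^ 2 := by positivity
        calc _ = Real.exp (1 - 1 / s ^ 2) * (1 / s ^ 2) * s ^ 2 := by field_simp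
          _ ≤ 1 * s ^ 2 := by gcongr
          _ = _ := one_mul _
    refine this.trans_isLittleO ?_
    have := Asymptotics.isLittleO_pow_sub_sub (1/2 : ℝ) (m := 2) (by norm_num)
    simpa using this
  · apply HasDerivAt.congr_of_eventuallyEq (f := fun t : ℝ => Real.exp (1 - 1 / (2 * t - 1) ^ 2))
    · unfold Psi1; rw [if_neg (not_le.2 h)]; exact hasDerivAt_aux t h
    · filter_upwards [Ioi_mem_nhds h] with u hu
      simp only [Psi, if_neg (not_le.2 (Set.mem_Ioi.1 hu))]

lemma Psi_lip (u v : ℝ) : |Psi u - Psi v| ≤ 5 * |u - v| := by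
  have := Convex.norm_image_sub_le_of_norm_hasDerivWithin_le (f := Psi) (f' := Psi1) (s := Set.univ)
    (C := 5) (x := v) (y := u) (fun x _ => (hasDerivAt_Psi x).hasDerivWithinAt)
    (fun x _ => by rw [Real.norm_eq_abs, abs_of_nonneg (Psi1_nonneg x)]; exact Psi1_le x)
    convex_univ trivial trivial
  simpa using this

lemma Psi1_lip_aux (u v : ℝ) (hu : 1 / 2 < u) (hv : 1 / 2 < v) :
    |Psi1 u - Psi1 v| ≤ 59 * |u - v| := by
  have := Convex.norm_image_sub_le_of_norm_hasDerivWithin_le (f := Psi1)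
    (f' := fun t => (16 * (1 / (2 * t - 1) ^ 2) ^ 3 - 24 * (1 / (2 * t - 1) ^ 2) ^ 2)
      * Real.exp (1 - 1 / (2 * t - 1) ^ 2)) (s := Set.Ioi (1 / 2))
    (C := 59) (x := v) (y := u) ?_ ?_ (convex_Ioi _) hv hu
  · simpa using this
  · intro t ht
    have ht' : 1 / 2 < t := ht
    have hs : 2 * t - 1 ≠ 0 := by intro h'; linarith
    have h1 : HasDerivAt (fun t : ℝ => 2 * t - 1) 2 t := by
      simpa using ((hasDerivAt_id t).const_mul 2).sub_const 1
    have h2 := (((h1.pow 3).inv (pow_ne_zero 3 hs)).const_mul 4).mul (hasDerivAt_aux t ht')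
    apply HasDerivAt.hasDerivWithinAt
    apply HasDerivAt.congr_of_eventuallyEq
      (f := fun t : ℝ => 4 / (2 * t - 1) ^ 3 * Real.exp (1 - 1 / (2 * t - 1) ^ 2))
    · refine HasDerivAt.congr_deriv (f := fun t : ℝ => 4 / (2 * t - 1) ^ 3 *
        Real.exp (1 - 1 / (2 * t - 1) ^ 2)) h2 ?_
      simp; field_simp; ring
    · filter_upwards [Ioi_mem_nhds ht'] with w hw
      simp only [Psi1, if_neg (not_le.2 (Set.mem_Ioi.1 hw))]
  · intro t ht
    have hw : 0 ≤ 1 / (2 * t - 1) ^ 2 := by positivity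
    set w := 1 / (2 * t - 1) ^ 2
    have h1 := sq_bound w hw
    have h2 := cube_bound w hw
    have h3 := exp_neg_one_le
    have h4 := exp_neg_two_le
    have h5 : 0 ≤ w ^ 2 * Real.exp (1 - w) := by positivity
    have h6 : 0 ≤ w ^ 3 * Real.exp (1 - w) := by positivity
    rw [Real.norm_eq_abs, abs_le]
    constructor <;> nlinarith

lemma Psi1_lip (u v : ℝ) : |Psi1 u - Psi1 v| ≤ 59 * |u - v| := by
  rcases le_or_gt u (1/2) with hu | hu <;> rcases le_or_gt v (1/2) with hv | hv
  · rw [Psi1_zero hu, Psi1_zero hv]; simp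
  · rw [Psi1_zero hu, zero_sub, abs_neg, abs_of_nonneg (Psi1_nonneg v)]
    have := Psi1_le_lin v hv
    rw [abs_sub_comm, abs_of_nonneg (by linarith)]; linarith
  · rw [Psi1_zero hv, sub_zero, abs_of_nonneg (Psi1_nonneg u)]
    have := Psi1_le_lin u hu
    rw [abs_of_nonneg (by linarith)]; linarith
  · exact Psi1_lip_aux u v hu hv

lemma Psi_sum_le (u : ℝ) : Psi (-u) + Psi u ≤ 2.72 := by
  rcases le_total u 0 with h | h
  · rw [Psi_zero (t := u) (by linarith)]; linarith [Psi_le (-u)]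
  · rw [Psi_zero (t := -u) (by linarith)]; linarith [Psi_le u]

/-! ### The function Phi -/

noncomputable def Phi1 (t : ℝ) : ℝ := Real.sqrt (Real.exp 1) * Real.exp (-t ^ 2 / 2)

lemma gauss_int : Integrable (fun τ : ℝ => Real.exp (-τ ^ 2 / 2)) := by
  have := integrable_exp_neg_mul_sq (b := 1 / 2) (by norm_num)
  convert this using 3; ring

lemma hasDerivAt_Phi (t : ℝ) : HasDerivAt Phi (Phi1 t) t := by
  have hc : Continuous (fun τ : ℝ => Real.exp (-τ ^ 2 / 2)) := by fun_prop
  have h := intervalIntegral.integral_hasDerivAt_right (hc.intervalIntegrable 0 t)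
    (hc.stronglyMeasurableAtFilter _ _) hc.continuousAt
  have h2 := (h.add_const (∫ τ in Set.Iic (0:ℝ), Real.exp (-τ ^ 2 / 2))).const_mul
    (Real.sqrt (Real.exp 1))
  suffices e : Phi = fun u => Real.sqrt (Real.exp 1) * ((∫ τ in (0:ℝ)..u, Real.exp (-τ ^ 2 / 2))
      + ∫ τ in Set.Iic (0:ℝ), Real.exp (-τ ^ 2 / 2)) by
    rw [e]; exact h2
  ext u
  simp only [Phi]
  rw [← intervalIntegral.integral_Iic_sub_Iic gauss_int.integrableOn gauss_int.integrableOn]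
  ring

lemma Phi_nonneg (t : ℝ) : 0 ≤ Phi t := by
  unfold Phi
  apply mul_nonneg (Real.sqrt_nonneg _)
  exact integral_nonneg fun _ => (Real.exp_pos _).le

lemma Phi_sum (t : ℝ) : Phi (-t) + Phi t ≤ 4.14 := by
  unfold Phi
  have h1 : ∫ τ in Set.Iic (-t), Real.exp (-τ ^ 2 / 2) = ∫ τ in Set.Ioi t, Real.exp (-τ ^ 2 / 2) := by
    have := integral_comp_neg_Iic (-t) (fun τ : ℝ => Real.exp (-τ ^ 2 / 2))
    simpa using this
  have h2 := intervalIntegral.integral_Iic_add_Ioi (b := t) gauss_int.integrableOn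
    gauss_int.integrableOn
  have h3 : ∫ τ : ℝ, Real.exp (-τ ^ 2 / 2) = Real.sqrt (2 * Real.pi) := by
    have := integral_gaussian (1 / 2)
    have e : Real.pi / (1 / 2) = 2 * Real.pi := by ring
    rw [e] at this
    rw [← this]; congr 1; ext; congr 1; ring
  rw [h1, ← mul_add, add_comm, h2, h3, ← Real.sqrt_mul (Real.exp_pos _).le]
  apply Real.sqrt_le_iff.2 ⟨by norm_num, ?_⟩
  have := Real.exp_one_lt_d9
  have := Real.pi_lt_d6
  have h5 : Real.exp 1 ≤ 2.7183 := by norm_num at *; linarith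
  have h6 : Real.pi ≤ 3.1416 := by norm_num at *; linarith
  nlinarith [Real.pi_pos, Real.exp_pos 1]

lemma sqrt_e_le : Real.sqrt (Real.exp 1) ≤ 1.65 := by
  apply Real.sqrt_le_iff.2 ⟨by norm_num, ?_⟩
  have := Real.exp_one_lt_d9
  norm_num at *; linarith

lemma Phi1_nonneg (t : ℝ) : 0 ≤ Phi1 t := by unfold Phi1; positivity

lemma Phi1_neg (t : ℝ) : Phi1 (-t) = Phi1 t := by unfold Phi1; simp

lemma Phi1_le (t : ℝ) : Phi1 t ≤ 1.65 := by
  unfold Phi1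
  have : Real.exp (-t ^ 2 / 2) ≤ 1 := by
    apply Real.exp_le_one_iff.2; nlinarith [sq_nonneg t]
  nlinarith [sqrt_e_le, Real.sqrt_nonneg (Real.exp 1), Real.exp_pos (-t ^ 2 / 2)]

lemma Phi_lip (u v : ℝ) : |Phi u - Phi v| ≤ 1.65 * |u - v| := by
  have := Convex.norm_image_sub_le_of_norm_hasDerivWithin_le (f := Phi) (f' := Phi1) (s := Set.univ)
    (C := 1.65) (x := v) (y := u) (fun x _ => (hasDerivAt_Phi x).hasDerivWithinAt)
    (fun x _ => by rw [Real.norm_eq_abs, abs_of_nonneg (Phi1_nonneg x)]; exact Phi1_le x)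
    convex_univ trivial trivial
  simpa using this

lemma Phi1_lip (u v : ℝ) : |Phi1 u - Phi1 v| ≤ 1 * |u - v| := by
  have := Convex.norm_image_sub_le_of_norm_hasDerivWithin_le (f := Phi1)
    (f' := fun t => -(t * Phi1 t)) (s := Set.univ)
    (C := 1) (x := v) (y := u) ?_ ?_ convex_univ trivial trivial
  · simpa using this
  · intro t _
    apply HasDerivAt.hasDerivWithinAt
    have h := ((((hasDerivAt_id t).pow 2).neg.div_const 2).exp).const_mul (Real.sqrt (Real.exp 1))
    refine HasDerivAt.congr_deriv (f := Phi1) h ?_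
    simp [Phi1]; ring
  · intro t _
    have e : Phi1 t = Real.exp (1 / 2 - t ^ 2 / 2) := by
      unfold Phi1
      rw [← Real.exp_half, ← Real.exp_add]; congr 1; ring
    have h1 := Real.add_one_le_exp (t ^ 2 / 2 - 1 / 2)
    have h2 : Phi1 t * Real.exp (t ^ 2 / 2 - 1 / 2) = 1 := by
      rw [e, ← Real.exp_add]; simp
    have h3 := Phi1_nonneg t
    rw [Real.norm_eq_abs, abs_le]
    constructor <;> nlinarith [sq_nonneg (t - 1), sq_nonneg (t + 1)]

/-! ### The function Gam -/

lemma Lam_nonneg (t : ℝ) : 0 ≤ Lam t := by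
  unfold Lam; split_ifs <;> positivity

lemma Lam_le (t : ℝ) : Lam t ≤ Real.exp (-(16 / 25)) := by
  unfold Lam; split_ifs with h
  · apply Real.exp_le_exp.2
    have h0 : 0 < 100 * (t - 1 / 4) * (1 / 2 - t) :=
      mul_pos (mul_pos (by norm_num) (by linarith [h.1])) (by linarith [h.2])
    rw [div_le_iff₀ h0]
    nlinarith [sq_nonneg (t - 3 / 8)]
  · positivity

lemma Lam_meas : Measurable Lam := by
  unfold Lam
  apply Measurable.ite
  · exact (measurableSet_Ioo (a := (1/4:ℝ)) (b := 1/2))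
  · fun_prop
  · fun_prop

lemma Lam_int (a b : ℝ) : IntervalIntegrable Lam volume a b := by
  apply (intervalIntegrable_const (c := Real.exp (-(16 / 25))) (μ := volume) (a := a) (b := b)).mono_fun
    Lam_meas.aestronglyMeasurable
  filter_upwards with t
  rw [Real.norm_eq_abs, Real.norm_eq_abs, abs_of_nonneg (Lam_nonneg t), abs_of_pos (Real.exp_pos _)]
  exact Lam_le t

lemma Lam_lower (t : ℝ) (h1 : 1 / 4 < t) (h2 : t < 1 / 2) :
    Real.exp (-(16 / 25)) * (41 / 25 - 1 / 25 * (4 / (4 * t - 1) + 4 / (2 - 4 * t))) ≤ Lam t := by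
  unfold Lam; rw [if_pos ⟨h1, h2⟩]
  have h3 := Real.add_one_le_exp (-1 / (100 * (t - 1 / 4) * (1 / 2 - t)) + 16 / 25)
  have e : Real.exp (-1 / (100 * (t - 1 / 4) * (1 / 2 - t)))
    = Real.exp (-(16 / 25)) * Real.exp (-1 / (100 * (t - 1 / 4) * (1 / 2 - t)) + 16 / 25) := by
    rw [← Real.exp_add]; congr 1; ring
  rw [e]
  gcongr
  refine le_trans (le_of_eq ?_) h3
  have h5 : 4 * t - 1 ≠ 0 := by intro; linarith
  have h6 : 2 - 4 * t ≠ 0 := by intro; linarith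
  have e2 : 100 * (t - 1 / 4) * (1 / 2 - t) = 25 / 4 * ((4 * t - 1) * (2 - 4 * t)) := by ring
  rw [e2]
  field_simp; ring

lemma Lam_integral : Real.exp (-(16 / 25)) ≤ 6.6 * ∫ τ in (1 / 4 : ℝ)..(1 / 2 : ℝ), Lam τ := by
  have hmono : ∫ τ in (5 / 18 : ℝ)..(17 / 36 : ℝ), Lam τ ≤ ∫ τ in (1 / 4 : ℝ)..(1 / 2 : ℝ), Lam τ := by
    apply intervalIntegral.integral_mono_interval (by norm_num) (by norm_num) (by norm_num) _ (Lam_int _ _)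
    filter_upwards with t using Lam_nonneg t
  have hcont : ContinuousOn (fun t : ℝ => Real.exp (-(16 / 25)) *
      (41 / 25 - 1 / 25 * (4 / (4 * t - 1) + 4 / (2 - 4 * t)))) (Set.uIcc (5 / 18) (17 / 36)) := by
    rw [Set.uIcc_of_le (by norm_num)]
    intro t ht
    have h5 : 4 * t - 1 ≠ 0 := by intro; linarith [ht.1]
    have h6 : 2 - 4 * t ≠ 0 := by intro; linarith [ht.2]
    apply ContinuousAt.continuousWithinAt
    fun_prop (disch := assumption)
  have hle : ∫ t in (5 / 18 : ℝ)..(17 / 36 : ℝ), Real.exp (-(16 / 25)) *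
      (41 / 25 - 1 / 25 * (4 / (4 * t - 1) + 4 / (2 - 4 * t)))
      ≤ ∫ τ in (5 / 18 : ℝ)..(17 / 36 : ℝ), Lam τ := by
    apply intervalIntegral.integral_mono_on (by norm_num) hcont.intervalIntegrable (Lam_int _ _)
    intro t ht
    exact Lam_lower t (by linarith [ht.1]) (by linarith [ht.2])
  have hF := intervalIntegral.integral_eq_sub_of_hasDerivAt
    (f := fun t : ℝ => Real.exp (-(16 / 25)) *
      (41 / 25 * t - 1 / 25 * (Real.log (4 * t - 1) - Real.log (2 - 4 * t))))
    (a := 5 / 18) (b := 17 / 36) (fun t ht => by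
      rw [Set.uIcc_of_le (by norm_num)] at ht
      have h5 : 4 * t - 1 ≠ 0 := by intro; linarith [ht.1]
      have h6 : 2 - 4 * t ≠ 0 := by intro; linarith [ht.2]
      have d1 : HasDerivAt (fun t : ℝ => 4 * t - 1) 4 t := by
        simpa using ((hasDerivAt_id t).const_mul 4).sub_const 1
      have d2 : HasDerivAt (fun t : ℝ => 2 - 4 * t) (-4) t := by
        simpa using ((hasDerivAt_id t).const_mul 4).const_sub 2
      have d := ((((hasDerivAt_id t).const_mul (41 / 25)).sub
        (((d1.log h5).sub (d2.log h6)).const_mul (1 / 25))).const_mul (Real.exp (-(16 / 25))))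
      refine HasDerivAt.congr_deriv (f := fun t : ℝ => Real.exp (-(16 / 25)) *
        (41 / 25 * t - 1 / 25 * (Real.log (4 * t - 1) - Real.log (2 - 4 * t)))) d ?_
      ring) hcont.intervalIntegrable
  have l1 : Real.log (1 / 9) = - Real.log 9 := by rw [one_div, Real.log_inv]
  have l2 : Real.log (8 / 9) = 3 * Real.log 2 - Real.log 9 := by
    rw [Real.log_div (by norm_num) (by norm_num), show (8:ℝ) = 2 ^ 3 by norm_num, Real.log_pow]
    norm_num
  have l3 := Real.log_two_lt_d9
  norm_num at hF l1 l3 hle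
  rw [l2, l1] at hF
  rw [hF] at hle
  have := Real.exp_pos (-(16/25))
  nlinarith

lemma Lam_integral_pos : 0 < ∫ τ in (1 / 4 : ℝ)..(1 / 2 : ℝ), Lam τ := by
  have := Lam_integral; have := Real.exp_pos (-(16/25)); linarith

lemma Gam_sub (a b : ℝ) : Gam a - Gam b
    = (∫ τ in b..a, Lam τ) / ∫ τ in (1 / 4 : ℝ)..(1 / 2 : ℝ), Lam τ := by
  unfold Gam
  rw [← sub_div, intervalIntegral.integral_interval_sub_left (Lam_int _ _) (Lam_int _ _)]

lemma Gam_lip (a b : ℝ) : |Gam a - Gam b| ≤ 6.6 * |a - b| := by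
  rw [Gam_sub, abs_div, abs_of_pos Lam_integral_pos, div_le_iff₀ Lam_integral_pos]
  have h := intervalIntegral.norm_integral_le_of_norm_le_const (a := b) (b := a) (f := Lam)
    (C := Real.exp (-(16 / 25))) (fun t _ => by
      rw [Real.norm_eq_abs, abs_of_nonneg (Lam_nonneg t)]; exact Lam_le t)
  rw [Real.norm_eq_abs] at h
  nlinarith [Lam_integral, abs_nonneg (a - b)]

lemma Gam_mono {a b : ℝ} (h : a ≤ b) : Gam a ≤ Gam b := by
  rw [← sub_nonneg, Gam_sub]
  apply div_nonneg _ Lam_integral_pos.le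
  exact intervalIntegral.integral_nonneg h fun _ _ => Lam_nonneg _

lemma Gam_low {t : ℝ} (h : t ≤ 1 / 4) : Gam t = 0 := by
  unfold Gam
  rw [intervalIntegral.integral_congr (g := fun _ => (0:ℝ))]
  · simp
  · intro u hu
    rw [Set.uIcc_of_ge h] at hu
    simp only [Lam]
    rw [if_neg]; intro h'; linarith [hu.2, h'.1]

lemma Gam_half : Gam (1 / 2) = 1 := by
  unfold Gam; exact div_self Lam_integral_pos.ne'

lemma Gam_high {t : ℝ} (h : 1 / 2 ≤ t) : Gam t = 1 := by
  have : Gam t - Gam (1 / 2) = 0 := by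
    rw [Gam_sub, intervalIntegral.integral_congr (g := fun _ => (0:ℝ))]
    · simp
    · intro u hu
      rw [Set.uIcc_of_le h] at hu
      simp only [Lam]
      rw [if_neg]; intro h'; linarith [hu.1, h'.2]
  rw [Gam_half] at this; linarith

lemma Gam_nonneg (t : ℝ) : 0 ≤ Gam t := by
  rcases le_total t (1 / 4) with h | h
  · rw [Gam_low h]
  · rw [← Gam_low le_rfl]; exact Gam_mono h

lemma Gam_le_one (t : ℝ) : Gam t ≤ 1 := by
  rcases le_total t (1 / 2) with h | h
  · rw [← Gam_half]; exact Gam_mono h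
  · rw [Gam_high h]

/-! ### Theta -/

lemma Theta_zero (T : ℕ) (x : EuclideanSpace ℝ (Fin (T + 1))) (i j : Fin (T + 1)) (hij : i ≤ j)
    (hj : 1 / 2 ≤ |x j|) : Theta T x i = 0 := by
  unfold Theta
  apply Gam_low
  have : 1 ≤ ∑ j ∈ Finset.univ.filter fun j : Fin (T + 1) => i ≤ j, Gam |x j| ^ 2 := by
    calc (1:ℝ) = Gam |x j| ^ 2 := by rw [Gam_high hj]; norm_num
      _ ≤ _ := Finset.single_le_sum (f := fun j => Gam |x j| ^ 2) (fun k _ => sq_nonneg _) (by simp [hij])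
  have := Real.one_le_sqrt.2 this
  linarith

lemma Theta_mem (T : ℕ) (x : EuclideanSpace ℝ (Fin (T + 1))) (i : Fin (T + 1)) :
    0 ≤ Theta T x i ∧ Theta T x i ≤ 1 := ⟨Gam_nonneg _, Gam_le_one _⟩

lemma Theta_lip (T : ℕ) (x y : EuclideanSpace ℝ (Fin (T + 1))) (i : Fin (T + 1)) :
    |Theta T x i - Theta T y i| ≤ 6.6 ^ 2 * ‖x - y‖ := by
  let V : EuclideanSpace ℝ (Fin (T + 1)) → EuclideanSpace ℝ (Fin (T + 1)) := fun x =>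
    WithLp.toLp 2 fun j => if i ≤ j then Gam |x j| else 0
  have hV : ∀ x, Real.sqrt (∑ j ∈ Finset.univ.filter fun j : Fin (T + 1) => i ≤ j, Gam |x j| ^ 2)
      = ‖V x‖ := by
    intro x
    rw [EuclideanSpace.norm_eq, Finset.sum_filter]
    congr 1
    apply Finset.sum_congr rfl
    intro j _
    simp only [V]
    split_ifs <;> simp
  have h2 : ‖V x - V y‖ ≤ 6.6 * ‖x - y‖ := by
    rw [EuclideanSpace.norm_eq, EuclideanSpace.norm_eq]
    have : (6.6:ℝ) = Real.sqrt (6.6 ^ 2) := by rw [Real.sqrt_sq]; norm_num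
    rw [this, ← Real.sqrt_mul (by norm_num)]
    apply Real.sqrt_le_sqrt
    rw [Finset.mul_sum]
    apply Finset.sum_le_sum
    intro j _
    rw [← mul_pow]
    apply pow_le_pow_left₀ (norm_nonneg _)
    simp only [V, PiLp.sub_apply, Real.norm_eq_abs]
    split_ifs
    · refine (Gam_lip _ _).trans ?_
      exact mul_le_mul_of_nonneg_left (abs_abs_sub_abs_le (x j) (y j)) (by norm_num)
    · simp; positivity
  unfold Theta
  rw [hV, hV]
  refine (Gam_lip _ _).trans ?_
  have e : 1 - ‖V x‖ - (1 - ‖V y‖) = -(‖V x‖ - ‖V y‖) := by ring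
  rw [e, abs_neg]
  have := abs_norm_sub_norm_le (V x) (V y)
  nlinarith

/-! ### The gradient of the chain function -/

noncomputable def Pc (u v : ℝ) : ℝ := -(Psi1 (-u) * Phi (-v)) - Psi1 u * Phi v
noncomputable def Qc (u v : ℝ) : ℝ := -((Psi (-u) + Psi u) * Phi1 v)

noncomputable def dA (T : ℕ) (x : EuclideanSpace ℝ (Fin (T + 1))) (i : Fin (T + 1)) : ℝ :=
  Fin.cases (motive := fun _ => ℝ) (-Phi1 (x 0)) (fun k => Qc (x k.castSucc) (x k.succ)) i

noncomputable def dB (T : ℕ) (x : EuclideanSpace ℝ (Fin (T + 1))) (i : Fin (T + 1)) : ℝ :=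
  Fin.lastCases (motive := fun _ => ℝ) 0 (fun k => Pc (x k.castSucc) (x k.succ)) i

lemma grad_eq (T : ℕ) (x : EuclideanSpace ℝ (Fin (T + 1))) (i : Fin (T + 1)) :
    gradient (chainF T) x i = dA T x i + dB T x i := by
  have hproj : ∀ j : Fin (T + 1), HasFDerivAt (fun x : EuclideanSpace ℝ (Fin (T + 1)) => x j)
      (EuclideanSpace.proj j : EuclideanSpace ℝ (Fin (T + 1)) →L[ℝ] ℝ) x :=
    fun j => (EuclideanSpace.proj j : EuclideanSpace ℝ (Fin (T + 1)) →L[ℝ] ℝ).hasFDerivAt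
  have h0 := ((hasDerivAt_Phi (x 0)).comp_hasFDerivAt x (hproj 0)).const_mul (-Psi 1)
  have hj : ∀ j ∈ (Finset.univ : Finset (Fin T)), HasFDerivAt (fun x : EuclideanSpace ℝ (Fin (T + 1)) =>
      Psi (-(x j.castSucc)) * Phi (-(x j.succ)) - Psi (x j.castSucc) * Phi (x j.succ))
      (Pc (x j.castSucc) (x j.succ) •
          (EuclideanSpace.proj j.castSucc : EuclideanSpace ℝ (Fin (T + 1)) →L[ℝ] ℝ)
        + Qc (x j.castSucc) (x j.succ) •
          (EuclideanSpace.proj j.succ : EuclideanSpace ℝ (Fin (T + 1)) →L[ℝ] ℝ)) x := by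
    intro j _
    have a1 := (hasDerivAt_Psi (-(x j.castSucc))).comp_hasFDerivAt x (hproj j.castSucc).neg
    have a2 := (hasDerivAt_Phi (-(x j.succ))).comp_hasFDerivAt x (hproj j.succ).neg
    have a3 := (hasDerivAt_Psi (x j.castSucc)).comp_hasFDerivAt x (hproj j.castSucc)
    have a4 := (hasDerivAt_Phi (x j.succ)).comp_hasFDerivAt x (hproj j.succ)
    refine HasFDerivAt.congr_fderiv ((a1.mul a2).sub (a3.mul a4)) ?_
    ext v
    simp [Pc, Qc, Phi1_neg]
    ring
  have hF := h0.add (HasFDerivAt.fun_sum hj)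
  have hF' : HasFDerivAt (chainF T) _ x := hF
  have hg : gradient (chainF T) x i = fderiv ℝ (chainF T) x (EuclideanSpace.single i 1) := by
    have h := InnerProductSpace.toDual_symm_apply (𝕜 := ℝ) (x := EuclideanSpace.single i (1:ℝ))
      (y := fderiv ℝ (chainF T) x)
    rw [← h, gradient, EuclideanSpace.inner_single_right]
    simp
  rw [hg, hF'.fderiv]
  have e1 : dA T x i = -Phi1 (x 0) * (EuclideanSpace.single i (1:ℝ) : EuclideanSpace ℝ (Fin (T + 1))) 0
      + ∑ j : Fin T, Qc (x j.castSucc) (x j.succ) *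
        (EuclideanSpace.single i (1:ℝ) : EuclideanSpace ℝ (Fin (T + 1))) j.succ := by
    refine Fin.cases ?_ (fun k => ?_) i
    · simp [dA]
    · simp [dA, Pi.single_apply]
  have e2 : dB T x i = ∑ j : Fin T, Pc (x j.castSucc) (x j.succ) *
        (EuclideanSpace.single i (1:ℝ) : EuclideanSpace ℝ (Fin (T + 1))) j.castSucc := by
    refine Fin.lastCases ?_ (fun k => ?_) i
    · simp [dB]
    · simp [dB, Pi.single_apply]
  rw [e1, e2, add_assoc, ← Finset.sum_add_distrib]
  simp only [add_apply, sum_apply, Psi_one]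
  congr 1
  · simp; split_ifs <;> simp
  · apply Finset.sum_congr rfl
    intro j _
    rw [add_comm]
    simp

lemma Qc_lip (u v u' v' : ℝ) : |Qc u v - Qc u' v'| ≤ 16.5 * |u - u'| + 3 * |v - v'| := by
  have h1 := Psi_lip u u'
  have h2 := Psi_lip (-u) (-u')
  have e : |-u - -u'| = |u - u'| := by rw [← abs_neg]; ring_nf
  rw [e] at h2
  have h3 := Phi1_lip v v'
  have e1 : Qc u v - Qc u' v' = -((Psi (-u) - Psi (-u')) + (Psi u - Psi u')) * Phi1 v
     + -(Psi (-u') + Psi u') * (Phi1 v - Phi1 v') := by unfold Qc; ring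
  rw [e1]
  refine (abs_add_le _ _).trans ?_
  rw [abs_mul, abs_mul, abs_neg, abs_neg, abs_of_nonneg (Phi1_nonneg v),
    abs_of_nonneg (add_nonneg (Psi_nonneg (-u')) (Psi_nonneg u'))]
  have h4 := abs_add_le (Psi (-u) - Psi (-u')) (Psi u - Psi u')
  have h5 : |Psi (-u) - Psi (-u') + (Psi u - Psi u')| * Phi1 v ≤ (10 * |u - u'|) * 1.65 := by
    apply mul_le_mul _ (Phi1_le v) (Phi1_nonneg v) (by positivity)
    linarith
  have h6 : (Psi (-u') + Psi u') * |Phi1 v - Phi1 v'| ≤ 3 * |v - v'| := by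
    apply mul_le_mul _ (by linarith) (abs_nonneg _) (by norm_num)
    have := Psi_sum_le u'
    norm_num at this ⊢; linarith
  linarith

lemma Pc_lip (u v u' v' : ℝ) : |Pc u v - Pc u' v'| ≤ 245 * |u - u'| + 16.5 * |v - v'| := by
  have h1 := Psi1_lip u u'
  have h2 := Psi1_lip (-u) (-u')
  have e : ∀ u u' : ℝ, |-u - -u'| = |u - u'| := by intro u u'; rw [← abs_neg]; ring_nf
  rw [e] at h2
  have h3 := Phi_lip v v'
  have h4 := Phi_lip (-v) (-v')
  rw [e] at h4
  have e1 : Pc u v - Pc u' v' = -((Psi1 (-u) - Psi1 (-u')) * Phi (-v) + (Psi1 u - Psi1 u') * Phi v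
     + Psi1 (-u') * (Phi (-v) - Phi (-v')) + Psi1 u' * (Phi v - Phi v')) := by unfold Pc; ring
  rw [e1, abs_neg]
  refine (abs_add_le _ _).trans ?_
  have a1 := abs_add_le ((Psi1 (-u) - Psi1 (-u')) * Phi (-v) + (Psi1 u - Psi1 u') * Phi v)
    (Psi1 (-u') * (Phi (-v) - Phi (-v')))
  have a2 := abs_add_le ((Psi1 (-u) - Psi1 (-u')) * Phi (-v)) ((Psi1 u - Psi1 u') * Phi v)
  rw [abs_mul, abs_of_nonneg (Psi1_nonneg _)] at a1 ⊢
  rw [abs_mul, abs_mul, abs_of_nonneg (Phi_nonneg _), abs_of_nonneg (Phi_nonneg _)] at a2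
  have b1 : |Psi1 (-u) - Psi1 (-u')| * Phi (-v) ≤ 59 * |u - u'| * Phi (-v) :=
    mul_le_mul_of_nonneg_right h2 (Phi_nonneg _)
  have b2 : |Psi1 u - Psi1 u'| * Phi v ≤ 59 * |u - u'| * Phi v :=
    mul_le_mul_of_nonneg_right h1 (Phi_nonneg _)
  have b3 : 59 * |u - u'| * (Phi (-v) + Phi v) ≤ 59 * |u - u'| * 4.14 :=
    mul_le_mul_of_nonneg_left (Phi_sum v) (by positivity)
  have b4 : Psi1 (-u') * |Phi (-v) - Phi (-v')| ≤ 5 * (1.65 * |v - v'|) :=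
    mul_le_mul (Psi1_le _) h4 (abs_nonneg _) (by norm_num)
  have b5 : Psi1 u' * |Phi v - Phi v'| ≤ 5 * (1.65 * |v - v'|) :=
    mul_le_mul (Psi1_le _) h3 (abs_nonneg _) (by norm_num)
  have := abs_nonneg (u - u')
  linarith

lemma sq_of_lip {α β q a b : ℝ} (hα : 0 ≤ α) (hβ : 0 ≤ β) (h : |q| ≤ α * |a| + β * |b|) :
    q ^ 2 ≤ (α + β) * (α * a ^ 2 + β * b ^ 2) := by
  have h1 : q ^ 2 ≤ (α * |a| + β * |b|) ^ 2 := by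
    rw [← sq_abs q]; gcongr
  have h2 : 0 ≤ α * β * (|a| - |b|) ^ 2 := by positivity
  rw [← sq_abs a, ← sq_abs b]
  linarith [h1, h2]

lemma norm_sq (T : ℕ) (z : EuclideanSpace ℝ (Fin (T + 1))) : ‖z‖ ^ 2 = ∑ i, z i ^ 2 := by
  rw [EuclideanSpace.norm_sq_eq]; simp

lemma sumA (T : ℕ) (x y : EuclideanSpace ℝ (Fin (T + 1))) :
    ∑ i, (dA T x i - dA T y i) ^ 2 ≤ 20 ^ 2 * ‖x - y‖ ^ 2 := by
  have hs := norm_sq T (x - y)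
  have hc := hs
  rw [Fin.sum_univ_succ] at hs
  rw [Fin.sum_univ_castSucc] at hc
  rw [Fin.sum_univ_succ]
  simp only [dA, Fin.cases_zero, Fin.cases_succ]
  have h0 : (-Phi1 (x 0) - -Phi1 (y 0)) ^ 2 ≤ ((x - y) 0) ^ 2 := by
    have := Phi1_lip (x 0) (y 0)
    have e : -Phi1 (x 0) - -Phi1 (y 0) = -(Phi1 (x 0) - Phi1 (y 0)) := by ring
    rw [e, neg_sq]
    apply sq_le_sq.2
    simpa using this
  have h1 : ∑ k : Fin T, (Qc (x k.castSucc) (x k.succ) - Qc (y k.castSucc) (y k.succ)) ^ 2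
      ≤ ∑ k : Fin T, (16.5 + 3) * (16.5 * (x - y) k.castSucc ^ 2 + 3 * (x - y) k.succ ^ 2) := by
    apply Finset.sum_le_sum
    intro k _
    exact sq_of_lip (by norm_num) (by norm_num) (Qc_lip _ _ _ _)
  rw [← Finset.mul_sum, Finset.sum_add_distrib, ← Finset.mul_sum, ← Finset.mul_sum] at h1
  nlinarith [sq_nonneg ((x - y) 0), sq_nonneg ((x - y) (Fin.last T)), sq_nonneg ‖x - y‖]

lemma sumB (T : ℕ) (x y : EuclideanSpace ℝ (Fin (T + 1))) :
    ∑ i, (dB T x i - dB T y i) ^ 2 ≤ 262 ^ 2 * ‖x - y‖ ^ 2 := by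
  have hs := norm_sq T (x - y)
  have hc := hs
  rw [Fin.sum_univ_succ] at hs
  rw [Fin.sum_univ_castSucc] at hc
  rw [Fin.sum_univ_castSucc]
  simp only [dB, Fin.lastCases_last, Fin.lastCases_castSucc]
  have h1 : ∑ k : Fin T, (Pc (x k.castSucc) (x k.succ) - Pc (y k.castSucc) (y k.succ)) ^ 2
      ≤ ∑ k : Fin T, (245 + 16.5) * (245 * (x - y) k.castSucc ^ 2 + 16.5 * (x - y) k.succ ^ 2) := by
    apply Finset.sum_le_sum
    intro k _
    exact sq_of_lip (by norm_num) (by norm_num) (Pc_lip _ _ _ _)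
  rw [← Finset.mul_sum, Finset.sum_add_distrib, ← Finset.mul_sum, ← Finset.mul_sum] at h1
  nlinarith [sq_nonneg ((x - y) 0), sq_nonneg ((x - y) (Fin.last T)), sq_nonneg ‖x - y‖]

lemma sumG (T : ℕ) (x y : EuclideanSpace ℝ (Fin (T + 1))) :
    ∑ i, (gradient (chainF T) x i - gradient (chainF T) y i) ^ 2 ≤ 328 ^ 2 * ‖x - y‖ ^ 2 := by
  have h : ∑ i, (gradient (chainF T) x i - gradient (chainF T) y i) ^ 2
      ≤ ∑ i, (5 * (dA T x i - dA T y i) ^ 2 + 1.25 * (dB T x i - dB T y i) ^ 2) := by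
    apply Finset.sum_le_sum
    intro i _
    rw [grad_eq, grad_eq]
    nlinarith [sq_nonneg (2 * (dA T x i - dA T y i) - 0.5 * (dB T x i - dB T y i))]
  rw [Finset.sum_add_distrib, ← Finset.mul_sum, ← Finset.mul_sum] at h
  nlinarith [sumA T x y, sumB T x y, sq_nonneg ‖x - y‖]

/-! ### The noise part -/

lemma grad_Theta (T : ℕ) (x : EuclideanSpace ℝ (Fin (T + 1))) (i : Fin (T + 1)) :
    gradient (chainF T) x i * Theta T x i = dA T x i * Theta T x i := by
  rcases le_or_gt (1 / 2) |x i| with h | h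
  · rw [Theta_zero T x i i le_rfl h]; simp
  · have hb : dB T x i = 0 := by
      revert h
      refine Fin.lastCases ?_ (fun k => ?_) i
      · intro _; simp [dB]
      · intro h
        have := abs_lt.1 h
        simp only [dB, Fin.lastCases_castSucc, Pc]
        rw [Psi1_zero (by linarith [this.1]), Psi1_zero (by linarith [this.2])]; simp
    rw [grad_eq, hb, add_zero]

lemma dA_le (T : ℕ) (x : EuclideanSpace ℝ (Fin (T + 1))) (i : Fin (T + 1)) :
    |dA T x i| ≤ 4.5 := by
  refine Fin.cases ?_ (fun k => ?_) i
  · simp only [dA, Fin.cases_zero]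
    rw [abs_neg, abs_of_nonneg (Phi1_nonneg _)]
    have := Phi1_le (x 0); norm_num at *; linarith
  · simp only [dA, Fin.cases_succ, Qc]
    have h1 := add_nonneg (Psi_nonneg (-(x k.castSucc))) (Psi_nonneg (x k.castSucc))
    rw [abs_neg, abs_of_nonneg (mul_nonneg h1 (Phi1_nonneg _))]
    calc _ ≤ (2.72:ℝ) * 1.65 := mul_le_mul (Psi_sum_le _) (Phi1_le _) (Phi1_nonneg _) (by norm_num)
      _ ≤ 4.5 := by norm_num

lemma h_lip (T : ℕ) (x y : EuclideanSpace ℝ (Fin (T + 1))) (i : Fin (T + 1)) :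
    (dA T x i * Theta T x i - dA T y i * Theta T y i) ^ 2 ≤ 230 ^ 2 * ‖x - y‖ ^ 2 := by
  have h1 : |dA T x i - dA T y i| ≤ 20 * ‖x - y‖ := by
    apply abs_le_of_sq_le_sq _ (by positivity)
    rw [mul_pow]
    exact (Finset.single_le_sum (f := fun i => (dA T x i - dA T y i) ^ 2)
      (fun _ _ => sq_nonneg _) (Finset.mem_univ i)).trans (sumA T x y)
  have h2 := Theta_lip T x y i
  have h3 := dA_le T y i
  have h4 := Theta_mem T x i
  have e : dA T x i * Theta T x i - dA T y i * Theta T y i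
    = (dA T x i - dA T y i) * Theta T x i + dA T y i * (Theta T x i - Theta T y i) := by ring
  have h5 : |dA T x i * Theta T x i - dA T y i * Theta T y i| ≤ 230 * ‖x - y‖ := by
    rw [e]
    refine (abs_add_le _ _).trans ?_
    rw [abs_mul, abs_mul, abs_of_nonneg h4.1]
    have b1 : |dA T x i - dA T y i| * Theta T x i ≤ 20 * ‖x - y‖ * 1 :=
      mul_le_mul h1 h4.2 h4.1 (by positivity)
    have b2 : |dA T y i| * |Theta T x i - Theta T y i| ≤ 4.5 * (6.6 ^ 2 * ‖x - y‖) :=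
      mul_le_mul h3 h2 (abs_nonneg _) (by norm_num)
    have := norm_nonneg (x - y)
    norm_num at b2
    linarith
  rw [← sq_abs, ← mul_pow]
  gcongr

lemma h_lt (T : ℕ) (x : EuclideanSpace ℝ (Fin (T + 1))) (i k : Fin (T + 1)) (hik : i < k)
    (hk : dA T x k * Theta T x k ≠ 0) : dA T x i * Theta T x i = 0 := by
  revert hik hk
  refine Fin.cases ?_ (fun k => ?_) k
  · intro h; exact absurd h (Fin.not_lt_zero _)
  · intro hik hk
    rcases le_or_gt (1 / 2) |x k.castSucc| with h | h
    · rw [Theta_zero T x i k.castSucc (Fin.le_castSucc_iff.2 hik) h]; simp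
    · exfalso; apply hk
      have := abs_lt.1 h
      simp only [dA, Fin.cases_succ, Qc]
      rw [Psi_zero (by linarith [this.1]), Psi_zero (by linarith [this.2])]; simp

lemma h_single (T : ℕ) (x : EuclideanSpace ℝ (Fin (T + 1))) :
    ∃ k, ∀ i, i ≠ k → dA T x i * Theta T x i = 0 := by
  by_cases h : ∃ k, dA T x k * Theta T x k ≠ 0
  · obtain ⟨k, hk⟩ := h
    refine ⟨k, fun i hi => ?_⟩
    rcases lt_or_gt_of_ne hi with h | h
    · exact h_lt T x i k h hk
    · by_contra h'
      exact hk (h_lt T x k i h h')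
  · push Not at h
    exact ⟨0, fun i _ => h i⟩

lemma sumH (T : ℕ) (x y : EuclideanSpace ℝ (Fin (T + 1))) :
    ∑ i, (gradient (chainF T) x i * Theta T x i - gradient (chainF T) y i * Theta T y i) ^ 2
      ≤ 328 ^ 2 * ‖x - y‖ ^ 2 := by
  obtain ⟨k, hk⟩ := h_single T x
  obtain ⟨l, hl⟩ := h_single T y
  simp only [grad_Theta]
  have hD : 0 ≤ 230 ^ 2 * ‖x - y‖ ^ 2 := by positivity
  have : ∑ i, (dA T x i * Theta T x i - dA T y i * Theta T y i) ^ 2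
      ≤ ∑ i, ((if i = k then 230 ^ 2 * ‖x - y‖ ^ 2 else 0)
        + (if i = l then 230 ^ 2 * ‖x - y‖ ^ 2 else 0)) := by
    apply Finset.sum_le_sum
    intro i _
    have := h_lip T x y i
    split_ifs with h1 h2 h2
    · linarith
    · linarith
    · linarith
    · rw [hk i h1, hl i h2]; simp
  rw [Finset.sum_add_distrib] at this
  simp only [Finset.sum_ite_eq', Finset.mem_univ, if_true] at this
  nlinarith [sq_nonneg ‖x - y‖]

/-- For `ξ ∼ Bernoulli(p)`, the smoothed estimator `ḡ_T` is
mean-squared smooth with constant `328/√p`: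
`E_ξ‖ḡ_T(x,ξ) − ḡ_T(y,ξ)‖² ≤ (328²/p)‖x − y‖²`.  (Stated for dimension `T + 1`;
the Bernoulli expectation is written out as `p·(value at ξ=1) + (1−p)·(value at ξ=0)`.) -/
theorem gbar_mean_squared_smooth
    (T : ℕ) (p : ℝ) (hp : p ∈ Set.Ioc (0 : ℝ) 1)
    (x y : EuclideanSpace ℝ (Fin (T + 1))) :
    p * ‖gbar T p x 1 - gbar T p y 1‖ ^ 2
        + (1 - p) * ‖gbar T p x 0 - gbar T p y 0‖ ^ 2
      ≤ 328 ^ 2 / p * ‖x - y‖ ^ 2 := by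
  obtain ⟨hp0, hp1⟩ := hp
  have hG := sumG T x y
  have hH := sumH T x y
  have key : p * ‖gbar T p x 1 - gbar T p y 1‖ ^ 2 + (1 - p) * ‖gbar T p x 0 - gbar T p y 0‖ ^ 2
      = ∑ i, (gradient (chainF T) x i - gradient (chainF T) y i) ^ 2 + (1 - p) / p *
        ∑ i, (gradient (chainF T) x i * Theta T x i
          - gradient (chainF T) y i * Theta T y i) ^ 2 := by
    rw [norm_sq, norm_sq, Finset.mul_sum, Finset.mul_sum, Finset.mul_sum,
      ← Finset.sum_add_distrib, ← Finset.sum_add_distrib]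
    apply Finset.sum_congr rfl
    intro i _
    simp only [gbar, PiLp.sub_apply]
    field_simp
    ring
  rw [key]
  have h1 : 0 ≤ (1 - p) / p := div_nonneg (by linarith) hp0.le
  calc _ ≤ 328 ^ 2 * ‖x - y‖ ^ 2 + (1 - p) / p * (328 ^ 2 * ‖x - y‖ ^ 2) := by gcongr
    _ = _ := by field_simp; ring
end

section
/- Let ε > 0, L > 0, set ℓ₁ = 152, λ = (ℓ₁/L)√(2ε), and fix an integer T ≥ 1. Define the rescaled chain function f : ℝ^T → ℝ by f(x) = (Lλ²/ℓ₁)·F_T(x/λ), so that ∇f(x) = (Lλ/ℓ₁)·∇F_T(x/λ). Then for every x ∈ ℝ^T with prog_0(x) < T, one has ‖∇f(x)‖² > 2ε (Euclidean norm); i.e., no point whose progress is below T is a 2ε-approximate stationary point of f. -/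
open MeasureTheory

lemma Psi_mono : Monotone Psi := by
  intro a b hab
  by_cases ha : a ≤ 1 / 2
  · have : Psi a = 0 := by unfold Psi; rw [if_pos ha]
    rw [this]; exact Psi_nonneg b
  · have hb : ¬ b ≤ 1 / 2 := by push Not at ha ⊢; linarith
    unfold Psi
    rw [if_neg ha, if_neg hb]
    push Not at ha hb
    apply Real.exp_le_exp.mpr
    have h1 : 0 < 2 * a - 1 := by linarith
    have h2 : 1 / (2 * b - 1) ^ 2 ≤ 1 / (2 * a - 1) ^ 2 := by
      apply one_div_le_one_div_of_le (by positivity)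
      apply pow_le_pow_left₀ h1.le; linarith
    linarith

lemma Psi_bound (t : ℝ) : Psi t ≤ Real.exp 1 * (2 * t - 1) ^ 2 := by
  unfold Psi; split_ifs with h
  · positivity
  · push Not at h
    have h1 : 0 < (2 * t - 1) ^ 2 := by
      have : 0 < 2 * t - 1 := by linarith
      positivity
    rw [sub_eq_add_neg, Real.exp_add, Real.exp_neg]
    apply mul_le_mul_of_nonneg_left _ (Real.exp_pos _).le
    rw [inv_le_comm₀ (Real.exp_pos _) h1]
    have := Real.add_one_le_exp (1 / (2 * t - 1) ^ 2)
    rw [one_div] at *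
    linarith

lemma Psi_diff : Differentiable ℝ Psi := by
  intro t
  rcases lt_trichotomy t (1 / 2) with h | h | h
  · have : Psi =ᶠ[nhds t] fun _ => 0 := by
      filter_upwards [Iio_mem_nhds h] with s hs
      unfold Psi; rw [if_pos (le_of_lt hs)]
    exact (differentiableAt_const 0).congr_of_eventuallyEq this
  · subst h
    have h0 : Psi (1 / 2) = 0 := by unfold Psi; simp
    have : HasDerivAt Psi 0 (1 / 2) := by
      rw [hasDerivAt_iff_isLittleO]
      have hO : (fun x' : ℝ => Psi x' - Psi (1 / 2) - (x' - 1 / 2) • (0 : ℝ)) =O[nhds (1 / 2)]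
          fun x' : ℝ => (x' - 1 / 2) ^ 2 := by
        apply Asymptotics.IsBigO.of_bound (4 * Real.exp 1)
        filter_upwards with s
        rw [h0, smul_zero, sub_zero, sub_zero, Real.norm_of_nonneg (Psi_nonneg s),
          Real.norm_of_nonneg (sq_nonneg _)]
        have := Psi_bound s
        nlinarith
      refine hO.trans_isLittleO ?_
      simpa using Asymptotics.isLittleO_pow_sub_sub (1 / 2 : ℝ) (m := 2) (by norm_num)
    exact this.differentiableAt
  · have : Psi =ᶠ[nhds t] fun s => Real.exp (1 - 1 / (2 * s - 1) ^ 2) := by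
      filter_upwards [Ioi_mem_nhds h] with s hs
      unfold Psi; rw [if_neg (not_le.mpr hs)]
    refine DifferentiableAt.congr_of_eventuallyEq ?_ this
    have : (2 * t - 1) ^ 2 ≠ 0 := by
      have : 0 < 2 * t - 1 := by linarith
      positivity
    fun_prop (disch := assumption)

lemma Phi_hasDeriv (t : ℝ) :
    HasDerivAt Phi (Real.sqrt (Real.exp 1) * Real.exp (-t ^ 2 / 2)) t := by
  have hc : Continuous (fun τ : ℝ => Real.exp (-τ ^ 2 / 2)) := by fun_prop
  have h1 : HasDerivAt (fun u => ∫ τ in (0:ℝ)..u, Real.exp (-τ ^ 2 / 2))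
      (Real.exp (-t ^ 2 / 2)) t :=
    (hc.integral_hasStrictDerivAt 0 t).hasDerivAt
  have h2 := ((h1.const_add (∫ τ in Set.Iic (0:ℝ), Real.exp (-τ ^ 2 / 2))).const_mul
    (Real.sqrt (Real.exp 1)))
  refine h2.congr_of_eventuallyEq ?_
  filter_upwards with s
  unfold Phi
  rw [← intervalIntegral.integral_Iic_sub_Iic gauss_int.integrableOn gauss_int.integrableOn]
  ring

lemma Phi_diff : Differentiable ℝ Phi := fun t => (Phi_hasDeriv t).differentiableAt

lemma Phi_deriv_nonneg (t : ℝ) : 0 ≤ deriv Phi t := by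
  rw [(Phi_hasDeriv t).deriv]; positivity

lemma Phi_deriv_gt (t : ℝ) (h : |t| < 1) : 1 < deriv Phi t := by
  rw [(Phi_hasDeriv t).deriv, ← Real.exp_half, ← Real.exp_add]
  apply Real.one_lt_exp_iff.mpr
  have := (sq_lt_one_iff_abs_lt_one t).mpr h
  linarith

lemma Psi_deriv_nonneg (t : ℝ) : 0 ≤ deriv Psi t := Psi_mono.deriv_nonneg

lemma chainF_diff (T : ℕ) : Differentiable ℝ (chainF T) := by
  have h1 := Psi_diff
  have h2 := Phi_diff
  unfold chainF
  have hc : ∀ i : Fin (T + 1), Differentiable ℝ (fun x : EuclideanSpace ℝ (Fin (T + 1)) => x i) := by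
    intro i; fun_prop
  have a1 : ∀ i : Fin (T + 1), Differentiable ℝ (fun x : EuclideanSpace ℝ (Fin (T + 1)) => Psi (x i)) :=
    fun i => h1.comp (hc i)
  have a2 : ∀ i : Fin (T + 1), Differentiable ℝ (fun x : EuclideanSpace ℝ (Fin (T + 1)) => Psi (-(x i))) :=
    fun i => h1.comp (hc i).neg
  have a3 : ∀ i : Fin (T + 1), Differentiable ℝ (fun x : EuclideanSpace ℝ (Fin (T + 1)) => Phi (x i)) :=
    fun i => h2.comp (hc i)
  have a4 : ∀ i : Fin (T + 1), Differentiable ℝ (fun x : EuclideanSpace ℝ (Fin (T + 1)) => Phi (-(x i))) :=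
    fun i => h2.comp (hc i).neg
  fun_prop

/-- derivative of a link in direction (va, vb), negated -/
noncomputable def linkD (a b va vb : ℝ) : ℝ :=
  (deriv Psi (-a) * Phi (-b) + deriv Psi a * Phi b) * va
    + (Psi (-a) * deriv Phi (-b) + Psi a * deriv Phi b) * vb

lemma linkD_nonneg (a b va vb : ℝ) (ha : 0 ≤ va) (hb : 0 ≤ vb) : 0 ≤ linkD a b va vb := by
  unfold linkD
  have := Psi_nonneg a
  have := Psi_nonneg (-a)
  have := Psi_deriv_nonneg a
  have := Psi_deriv_nonneg (-a)
  have := Phi_nonneg b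
  have := Phi_nonneg (-b)
  have := Phi_deriv_nonneg b
  have := Phi_deriv_nonneg (-b)
  positivity

lemma linkD_gt (a b va : ℝ) (h1 : 0 ≤ va) (ha : 1 ≤ |a|) (hb : |b| < 1) :
    1 < linkD a b va 1 := by
  have h0 : 1 < linkD a b 0 1 := by
    unfold linkD
    have p1 := Phi_deriv_gt b hb
    have p2 := Phi_deriv_gt (-b) (by rwa [abs_neg])
    have q1 := Psi_nonneg a
    have q2 := Psi_nonneg (-a)
    have e := Psi_one
    rcases le_abs.mp ha with h | h
    · have := Psi_mono h
      nlinarith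
    · have := Psi_mono h
      nlinarith
  have h2 := linkD_nonneg a b va 0 h1 le_rfl
  have : linkD a b va 1 = linkD a b va 0 + linkD a b 0 1 := by unfold linkD; ring
  linarith

lemma link_hasDeriv (a b va vb : ℝ) :
    HasDerivAt (fun t : ℝ => Psi (-(a + t * va)) * Phi (-(b + t * vb))
      - Psi (a + t * va) * Phi (b + t * vb)) (-linkD a b va vb) 0 := by
  have lin : ∀ a va : ℝ, HasDerivAt (fun t : ℝ => a + t * va) va 0 := by
    intro a va
    simpa using ((hasDerivAt_id (0:ℝ)).mul_const va).const_add a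
  have P : ∀ a va : ℝ, HasDerivAt (fun t : ℝ => Psi (a + t * va)) (deriv Psi a * va) 0 := by
    intro a va
    refine HasDerivAt.comp (h₂ := Psi) (0:ℝ) ?_ (lin a va)
    simpa using (Psi_diff a).hasDerivAt
  have Q : ∀ a va : ℝ, HasDerivAt (fun t : ℝ => Phi (a + t * va)) (deriv Phi a * va) 0 := by
    intro a va
    refine HasDerivAt.comp (h₂ := Phi) (0:ℝ) ?_ (lin a va)
    simpa using (Phi_diff a).hasDerivAt
  have e : ∀ a t va : ℝ, -(a + t * va) = -a + t * (-va) := by intros; ring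
  simp only [e]
  refine (((P (-a) (-va)).mul (Q (-b) (-vb))).sub ((P a va).mul (Q b vb))).congr_deriv ?_
  simp only [zero_mul, add_zero]
  unfold linkD; ring

lemma chainF_dir (T : ℕ) (y v : EuclideanSpace ℝ (Fin (T + 1))) :
    fderiv ℝ (chainF T) y v =
      -(deriv Phi (y 0) * v 0 + ∑ i : Fin T, linkD (y i.castSucc) (y i.succ) (v i.castSucc) (v i.succ)) := by
  have h1 : HasDerivAt (fun t : ℝ => chainF T (y + t • v)) (fderiv ℝ (chainF T) y v) 0 :=
    ((chainF_diff T y).hasFDerivAt.hasLineDerivAt v)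
  refine h1.unique ?_
  unfold chainF
  simp only [PiLp.add_apply, PiLp.smul_apply, smul_eq_mul, Psi_one]
  have lin : HasDerivAt (fun t : ℝ => y 0 + t * v 0) (v 0) 0 := by
    simpa using ((hasDerivAt_id (0:ℝ)).mul_const (v 0)).const_add (y 0)
  have Q : HasDerivAt (fun t : ℝ => Phi (y 0 + t * v 0)) (deriv Phi (y 0) * v 0) 0 := by
    refine HasDerivAt.comp (h₂ := Phi) (0:ℝ) ?_ lin
    simpa using (Phi_diff (y 0)).hasDerivAt
  have S := HasDerivAt.fun_sum (u := Finset.univ) (fun (i : Fin T) _ =>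
    link_hasDeriv (y i.castSucc) (y i.succ) (v i.castSucc) (v i.succ))
  refine ((Q.const_mul (-1)).add S).congr_deriv ?_
  rw [Finset.sum_neg_distrib]; ring

lemma chainF_exists (T : ℕ) (y : EuclideanSpace ℝ (Fin (T + 1))) (hy : y (Fin.last T) = 0) :
    ∃ j, fderiv ℝ (chainF T) y (EuclideanSpace.single j 1) < -1 := by
  classical
  have hex : ∃ n : ℕ, ∃ h : n < T + 1, |y ⟨n, h⟩| < 1 :=
    ⟨T, Nat.lt_succ_self T, by
      have : (⟨T, Nat.lt_succ_self T⟩ : Fin (T + 1)) = Fin.last T := rfl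
      rw [this, hy]; simp⟩
  obtain ⟨hn, hlt⟩ := Nat.find_spec hex
  have hmin := fun m => Nat.find_min (m := m) hex
  generalize Nat.find hex = n at *
  refine ⟨⟨n, hn⟩, ?_⟩
  rw [chainF_dir]
  set v : EuclideanSpace ℝ (Fin (T + 1)) := EuclideanSpace.single ⟨n, hn⟩ 1 with hv
  have vn : ∀ i, 0 ≤ v i := by
    intro i; rw [hv, PiLp.single_apply]; split_ifs <;> norm_num
  have vj : v ⟨n, hn⟩ = 1 := by simp [hv]
  have nn : ∀ i ∈ (Finset.univ : Finset (Fin T)),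
      0 ≤ linkD (y i.castSucc) (y i.succ) (v i.castSucc) (v i.succ) :=
    fun i _ => linkD_nonneg _ _ _ _ (vn _) (vn _)
  rcases n with _ | m
  · have s := Finset.sum_nonneg nn
    have e : (⟨0, hn⟩ : Fin (T + 1)) = 0 := rfl
    rw [e] at vj hlt
    have := Phi_deriv_gt _ hlt
    rw [vj]; linarith
  · have s := Finset.single_le_sum nn (Finset.mem_univ (⟨m, by omega⟩ : Fin T))
    have e : (⟨m, by omega⟩ : Fin T).succ = (⟨m + 1, hn⟩ : Fin (T + 1)) := rfl
    rw [e, vj] at s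
    have hm := hmin m (Nat.lt_succ_self m)
    push Not at hm
    have g := linkD_gt _ _ _ (vn (⟨m, by omega⟩ : Fin T).castSucc)
      (hm (by omega)) hlt
    have := mul_nonneg (Phi_deriv_nonneg (y 0)) (vn 0)
    have g' := lt_of_lt_of_le g s
    linarith

theorem rescaled_chain_large_gradient
    (L ε : ℝ) (hL : 0 < L) (hε : 0 < ε) (T : ℕ)
    (lam : ℝ) (hlam : lam = 152 / L * Real.sqrt (2 * ε))
    (f : EuclideanSpace ℝ (Fin (T + 1)) → ℝ)
    (hf : ∀ x, f x = L * lam ^ 2 / 152 * chainF T (lam⁻¹ • x)) :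
    ∀ x : EuclideanSpace ℝ (Fin (T + 1)),
      prog 0 x < T + 1 → 2 * ε < ‖gradient f x‖ ^ 2 := by
  intro x hx
  have hlast : x (Fin.last T) = 0 := by
    by_contra hne
    have hmem : Fin.last T ∈ Finset.univ.filter fun i : Fin (T + 1) => (0:ℝ) < |x i| := by
      simp [hne]
    have := Finset.le_sup (f := fun i : Fin (T + 1) => (i : ℕ) + 1) hmem
    unfold prog at hx
    simp only [Fin.val_last] at this
    omega
  have hs : 0 < Real.sqrt (2 * ε) := Real.sqrt_pos.mpr (by linarith)
  have hl : 0 < lam := by rw [hlam]; positivity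
  obtain ⟨j, hj⟩ := chainF_exists T (lam⁻¹ • x) (by simp [hlast])
  set v : EuclideanSpace ℝ (Fin (T + 1)) := EuclideanSpace.single j 1 with hv
  have hfe : f = fun x => L * lam ^ 2 / 152 * chainF T (lam⁻¹ • x) := funext hf
  have hF := (chainF_diff T (lam⁻¹ • x)).hasFDerivAt
  have hD : HasFDerivAt f ((L * lam ^ 2 / 152) • ((fderiv ℝ (chainF T) (lam⁻¹ • x)).comp
      (lam⁻¹ • ContinuousLinearMap.id ℝ (EuclideanSpace ℝ (Fin (T + 1)))))) x := by
    rw [hfe]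
    exact (hF.comp x ((hasFDerivAt_id x).const_smul lam⁻¹)).const_mul _
  have hdir : fderiv ℝ f x v = Real.sqrt (2 * ε) * fderiv ℝ (chainF T) (lam⁻¹ • x) v := by
    rw [hD.fderiv]
    have : L * lam ^ 2 / 152 * lam⁻¹ = Real.sqrt (2 * ε) := by
      have : L * lam = 152 * Real.sqrt (2 * ε) := by rw [hlam]; field_simp
      field_simp
      linarith
    simp [← this, mul_assoc]
  have hn : ‖gradient f x‖ = ‖fderiv ℝ f x‖ := by
    unfold gradient; simp
  have hle : Real.sqrt (2 * ε) < ‖gradient f x‖ := by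
    rw [hn]
    have h1 := (fderiv ℝ f x).le_opNorm v
    have h2 : ‖v‖ = 1 := by simp [hv]
    rw [h2, mul_one, hdir, Real.norm_eq_abs] at h1
    have h3 := neg_abs_le (Real.sqrt (2 * ε) * fderiv ℝ (chainF T) (lam⁻¹ • x) v)
    nlinarith
  calc 2 * ε = Real.sqrt (2 * ε) ^ 2 := (Real.sq_sqrt (by linarith)).symm
    _ < _ := pow_lt_pow_left₀ hle hs.le (by norm_num)
end
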